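/- arXiv:1802.03978 — 8 statements merged into one kernel-verified Lean document; each statement's English description precedes it below -/
import Mathlib

section
/- Consider groups S and H, group homomorphisms d₀, d₁ : S → H and ε : H → S with d₀ ∘ ε = id and d₁ ∘ ε = id, and a function m : S × S → S satisfying: m(β, ε(d₀(β))) = β and m(ε(d₁(β)), β) = β for all β ∈ S, and the interchange law m(β₁ γ₁, β γ) = m(β₁, β) · m(γ₁, γ) whenever d₁(β) = d₀(β₁) and d₁(γ) = d₀(γ₁). Then for all α, α₁ ∈ S with d₀(α) = 1 and d₀(α₁) = 1: α · α₁ · α⁻¹ = ε(d₁(α)) · α₁ · ε(d₁(α))⁻¹; that is, conjugation in ker d₀ agrees with conjugation by the identity arrow at the target. -/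
/-!
The kernels of `d₀` and `d₁` commute elementwise: for `a ∈ ker d₀` and `b ∈ ker d₁` the composite
`m (a, b)` equals both `a * b` and `b * a`, by applying the interchange law to
`(a * 1, 1 * b)` and to `(1 * a, b * 1)` (an Eckmann–Hilton argument). Since
`(ε (d₁ α))⁻¹ * α` lies in `ker d₁`, it commutes with `α₁ ∈ ker d₀`, so conjugating `α₁` by `α`
is the same as conjugating it by `ε (d₁ α)`.
-/

/-- In a group-groupoid, conjugation in ker d₀ agrees with conjugation by
the identity arrow at the target: α·α₁·α⁻¹ = ε(d₁(α))·α₁·ε(d₁(α))⁻¹ for α, α₁ ∈ ker d₀. -/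
theorem conj_in_ker_d0_eq_conj_by_identity {S H : Type*} [Group S] [Group H]
    (d₀ d₁ : S →* H) (ε : H →* S)
    (h₀ : ∀ x, d₀ (ε x) = x) (h₁ : ∀ x, d₁ (ε x) = x)
    (m : S × S → S)
    (munit₀ : ∀ β : S, m (β, ε (d₀ β)) = β)
    (munit₁ : ∀ β : S, m (ε (d₁ β), β) = β)
    (interchange : ∀ β β₁ γ γ₁ : S, d₁ β = d₀ β₁ → d₁ γ = d₀ γ₁ →
      m (β₁ * γ₁, β * γ) = m (β₁, β) * m (γ₁, γ)) :
    ∀ α α₁ : S, d₀ α = 1 → d₀ α₁ = 1 →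
      α * α₁ * α⁻¹ = ε (d₁ α) * α₁ * (ε (d₁ α))⁻¹ := by
  intro α α₁ _ hα₁
  have unit_right : ∀ a : S, d₀ a = 1 → m (a, 1) = a := fun a ha => by
    simpa [ha] using munit₀ a
  have unit_left : ∀ b : S, d₁ b = 1 → m (1, b) = b := fun b hb => by
    simpa [hb] using munit₁ b
  have comm : ∀ a b : S, d₀ a = 1 → d₁ b = 1 → a * b = b * a := fun a b ha hb => by
    have hab := interchange 1 a b 1 (by simp [ha]) (by simp [hb])
    have hba := interchange b 1 1 a (by simp [hb]) (by simp [ha])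
    rw [mul_one, one_mul, unit_right a ha, unit_left b hb] at hab hba
    exact hab.symm.trans hba
  have key := comm α₁ ((ε (d₁ α))⁻¹ * α) hα₁ (by simp [h₁])
  rw [mul_inv_eq_iff_eq_mul]
  calc α * α₁ = ε (d₁ α) * ((ε (d₁ α))⁻¹ * α * α₁) := by group
    _ = ε (d₁ α) * (α₁ * ((ε (d₁ α))⁻¹ * α)) := by rw [key]
    _ = ε (d₁ α) * α₁ * (ε (d₁ α))⁻¹ * α := by simp only [mul_assoc]
end

section
/- Let H, H₀ be groups with group homomorphisms d₀, d₁ : H → H₀ and ε : H₀ → H satisfying d₀ ∘ ε = id and d₁ ∘ ε = id, and suppose every element of ker d₀ commutes with every element of ker d₁ (an encoded group-groupoid). Then: (i) for every p ∈ H₀, conjugation by ε(p) maps ker d₀ into itself, and p ↦ (m ↦ ε(p) m ε(p)⁻¹) is a group homomorphism H₀ → Aut(ker d₀); (ii) for all p ∈ H₀ and m ∈ ker d₀: d₁(ε(p) m ε(p)⁻¹) = p · d₁(m) · p⁻¹; (iii) for all m, m₁ ∈ ker d₀: ε(d₁(m)) · m₁ · ε(d₁(m))⁻¹ = m · m₁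 · m⁻¹. In other words, the restriction of d₁ to ker d₀, together with the action p • m = ε(p) m ε(p)⁻¹, is a crossed module of groups (ker d₀, H₀, d₁). -/
/-- For a group-groupoid (H, H₀, d₀, d₁, ε), the restriction of d₁ to
ker d₀ together with the action p • m = ε(p)·m·ε(p)⁻¹ is a crossed module
(ker d₀, H₀, d₁): (i) the action is well defined and by a homomorphism into Aut(ker d₀),
(ii) d₁ is equivariant, (iii) the Peiffer identity holds. -/
theorem group_groupoid_gives_crossed_module {H H₀ : Type*} [Group H] [Group H₀]
    (d₀ d₁ : H →* H₀) (ε : H₀ →* H)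
    (h₀ : ∀ x, d₀ (ε x) = x) (h₁ : ∀ x, d₁ (ε x) = x)
    (hcomm : ∀ a b : H, d₀ a = 1 → d₁ b = 1 → Commute a b) :
    (∀ (p : H₀) (m : H), m ∈ d₀.ker → ε p * m * (ε p)⁻¹ ∈ d₀.ker) ∧
    (∃ φ : H₀ →* MulAut d₀.ker, ∀ (p : H₀) (m : d₀.ker),
      ((φ p m : H) = ε p * (m : H) * (ε p)⁻¹)) ∧
    (∀ (p : H₀) (m : H), m ∈ d₀.ker → d₁ (ε p * m * (ε p)⁻¹) = p * d₁ m * p⁻¹) ∧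
    (∀ m m₁ : H, m ∈ d₀.ker → m₁ ∈ d₀.ker →
      ε (d₁ m) * m₁ * (ε (d₁ m))⁻¹ = m * m₁ * m⁻¹) := by
  refine ⟨fun p m hm => d₀.normal_ker.conj_mem m hm (ε p),
    ⟨MulAut.conjNormal.comp ε, fun p m => MulAut.conjNormal_apply (ε p) m⟩,
    fun p m _ => by simp [h₁], fun m m₁ _ hm₁ => ?_⟩
  -- `m⁻¹ * ε (d₁ m)` lies in `ker d₁`, so conjugation by it fixes `m₁ ∈ ker d₀`.
  have hc : m₁ * (m⁻¹ * ε (d₁ m)) = m⁻¹ * ε (d₁ m) * m₁ :=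
    hcomm m₁ (m⁻¹ * ε (d₁ m)) hm₁ (by simp [h₁])
  calc ε (d₁ m) * m₁ * (ε (d₁ m))⁻¹
      = m * (m⁻¹ * ε (d₁ m) * m₁) * (ε (d₁ m))⁻¹ := by group
    _ = m * (m₁ * (m⁻¹ * ε (d₁ m))) * (ε (d₁ m))⁻¹ := by rw [hc]
    _ = m * m₁ * m⁻¹ := by group
end

section
/- Let (A, B, ∂) be a crossed module of groups and form the semidirect product A ⋊ B with multiplication (a, b)(a₁, b₁) = (a · (b • a₁), b b₁). Define d₀, d₁ : A ⋊ B → B by d₀(a, b) = b and d₁(a, b) = ∂(a) · b, and ε : B → A ⋊ B by ε(b) = (1, b). Then d₀, d₁ and ε are group homomorphisms with d₀ ∘ ε = id and d₁ ∘ ε = id, and every element of ker d₀ commutes with every element of ker d₁ in A ⋊ B. Hence A ⋊ B carries a group-groupoid structure with object group B. -/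
/-- For a crossed module (A, B, ∂), the semidirect product A ⋊ B carries a
group-groupoid structure over B, with d₀(a,b) = b, d₁(a,b) = ∂(a)·b, ε(b) = (1,b):
these are homomorphisms, d₀ ∘ ε = d₁ ∘ ε = id, and ker d₀ commutes with ker d₁. -/
theorem crossed_module_gives_group_groupoid {A B : Type*} [Group A] [Group B]
    (φ : B →* MulAut A) (δ : A →* B)
    (hpeif1 : ∀ (b : B) (a : A), δ (φ b a) = b * δ a * b⁻¹)
    (hpeif2 : ∀ a a₁ : A, φ (δ a) a₁ = a * a₁ * a⁻¹) :
    ∃ (d₀ d₁ : (A ⋊[φ] B) →* B) (ε : B →* A ⋊[φ] B),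
      (∀ x : A ⋊[φ] B, d₀ x = x.right) ∧
      (∀ x : A ⋊[φ] B, d₁ x = δ x.left * x.right) ∧
      (∀ b : B, ε b = (⟨1, b⟩ : A ⋊[φ] B)) ∧
      (∀ b : B, d₀ (ε b) = b) ∧ (∀ b : B, d₁ (ε b) = b) ∧
      (∀ x y : A ⋊[φ] B, d₀ x = 1 → d₁ y = 1 → Commute x y) := by
  refine ⟨SemidirectProduct.rightHom,
    { toFun := fun x => δ x.left * x.right
      map_one' := by simp
      map_mul' := fun x y => by
        simp only [SemidirectProduct.mul_left, SemidirectProduct.mul_right, map_mul, hpeif1]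
        group },
    SemidirectProduct.inr, fun _ => rfl, fun _ => rfl, fun _ => rfl, fun _ => rfl,
    fun b => by simp, ?_⟩
  rintro ⟨a, b⟩ ⟨c, d⟩ hx hy
  obtain rfl : b = 1 := hx
  -- `(c, d)` lies in `ker d₁` exactly when `d = δ c⁻¹`, so `d` acts on `A` as conjugation by `c⁻¹`
  -- and both products have first component `a * c`.
  obtain rfl : d = δ c⁻¹ := by
    rw [map_inv]
    exact eq_inv_of_mul_eq_one_right hy
  apply SemidirectProduct.ext
  · simp only [SemidirectProduct.mul_left, hpeif2, map_one, MulAut.one_apply]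
    group
  · simp
end

section
/- Let (G, G₀, d₀ᴳ, d₁ᴳ, εᴳ), (H, H₀, d₀ᴴ, d₁ᴴ, εᴴ), ∂, ∂₀ and the actions be an encoded crossed module of group-groupoids, with L = ker d₀ᴳ, M = ker d₀ᴴ, N = G₀ and h(m, n) = (m • εᴳ(n)) · εᴳ(n)⁻¹. Then [axiom CS3] for all l ∈ L, m ∈ M and n ∈ N: h(∂(l), n) = l · (εᴴ(∂₀(n)) • l⁻¹) and h(m, d₁ᴳ(l)) = (m • l) · l⁻¹. -/
/-- An encoded crossed module of group-groupoids (multiplicatively written): two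
group-groupoids (G, G₀) and (H, H₀), a morphism (bdry, bdry0) between them, and
compatible actions of H on G and of H₀ on G₀ satisfying the crossed module identities
and the triviality properties of derived actions. -/
structure XModGG (G G₀ H H₀ : Type*) [Group G] [Group G₀] [Group H] [Group H₀] where
  d0G : G →* G₀
  d1G : G →* G₀
  epsG : G₀ →* G
  d0H : H →* H₀
  d1H : H →* H₀
  epsH : H₀ →* H
  d0G_eps : ∀ x, d0G (epsG x) = x
  d1G_eps : ∀ x, d1G (epsG x) = x
  d0H_eps : ∀ y, d0H (epsH y) = y
  d1H_eps : ∀ y, d1H (epsH y) = y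
  commG : ∀ a b : G, d0G a = 1 → d1G b = 1 → Commute a b
  commH : ∀ a b : H, d0H a = 1 → d1H b = 1 → Commute a b
  bdry : G →* H
  bdry0 : G₀ →* H₀
  compat_d0 : ∀ a, d0H (bdry a) = bdry0 (d0G a)
  compat_d1 : ∀ a, d1H (bdry a) = bdry0 (d1G a)
  compat_eps : ∀ x, bdry (epsG x) = epsH (bdry0 x)
  act : H →* MulAut G
  act0 : H₀ →* MulAut G₀
  act_d0 : ∀ (b : H) (a : G), d0G (act b a) = act0 (d0H b) (d0G a)
  act_d1 : ∀ (b : H) (a : G), d1G (act b a) = act0 (d1H b) (d1G a)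
  act_eps : ∀ (y : H₀) (x : G₀), epsG (act0 y x) = act (epsH y) (epsG x)
  xmod1 : ∀ (b : H) (a : G), bdry (act b a) = b * bdry a * b⁻¹
  xmod2 : ∀ a a₁ : G, act (bdry a) a₁ = a * a₁ * a⁻¹
  triv1 : ∀ (b : H) (a : G), d0H b = 1 → d1G a = 1 → act b a = a
  triv2 : ∀ (b : H) (a : G), d1H b = 1 → d0G a = 1 → act b a = a

/-- The h-map h(m, n) = (m • εᴳ(n)) · εᴳ(n)⁻¹ of the associated crossed square. -/
def XModGG.hmap {G G₀ H H₀ : Type*} [Group G] [Group G₀] [Group H] [Group H₀]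
    (X : XModGG G G₀ H H₀) (m : H) (n : G₀) : G :=
  X.act m (X.epsG n) * (X.epsG n)⁻¹

/-- axiom [CS3] for the crossed square associated with a crossed module of
group-groupoids: h(∂(l), n) = l · (n • l⁻¹) and h(m, d₁ᴳ(l)) = (m • l) · l⁻¹. -/
theorem xmodgg_crossed_square_CS3 {G G₀ H H₀ : Type*}
    [Group G] [Group G₀] [Group H] [Group H₀] (X : XModGG G G₀ H H₀) :
    (∀ l : G, l ∈ X.d0G.ker → ∀ n : G₀,
      X.hmap (X.bdry l) n = l * X.act (X.epsH (X.bdry0 n)) l⁻¹) ∧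
    (∀ m : H, m ∈ X.d0H.ker → ∀ l : G, l ∈ X.d0G.ker →
      X.hmap m (X.d1G l) = X.act m l * l⁻¹) := by
  refine ⟨fun l _ n => ?_, fun m hm l _ => ?_⟩
  -- Both sides are the commutator of `l` and `εᴳ(n)`, by the Peiffer identity.
  · rw [XModGG.hmap, X.xmod2, ← X.compat_eps, X.xmod2]
    group
  -- `l⁻¹ · εᴳ(d₁ᴳ l)` lies in `ker d₁ᴳ`, so `m ∈ ker d₀ᴴ` fixes it.
  · have h := X.triv1 m (l⁻¹ * X.epsG (X.d1G l)) hm (by simp [X.d1G_eps])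
    rw [map_mul, map_inv, inv_mul_eq_iff_eq_mul] at h
    rw [XModGG.hmap, h]
    group
end

section
/- Let (G, G₀, d₀ᴳ, d₁ᴳ, εᴳ), (H, H₀, d₀ᴴ, d₁ᴴ, εᴴ), ∂, ∂₀ and the actions be an encoded crossed module of group-groupoids, with M = ker d₀ᴴ, N = G₀ and h(m, n) = (m • εᴳ(n)) · εᴳ(n)⁻¹. Then [axiom CS4] for all m, m′ ∈ M and n, n′ ∈ N: h(m m′, n) = (m • h(m′, n)) · h(m, n) and h(m, n n′) = h(m, n) · (εᴴ(∂₀(n)) • h(m, n′)). -/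
/-- axiom [CS4] for the crossed square associated with a crossed module of
group-groupoids: h(mm′, n) = (m • h(m′, n)) · h(m, n) and
h(m, nn′) = h(m, n) · (n • h(m, n′)) (where n acts via εᴴ ∘ ∂₀). -/
theorem xmodgg_crossed_square_CS4 {G G₀ H H₀ : Type*}
    [Group G] [Group G₀] [Group H] [Group H₀] (X : XModGG G G₀ H H₀) :
    ∀ m m' : H, m ∈ X.d0H.ker → m' ∈ X.d0H.ker → ∀ n n' : G₀,
      X.hmap (m * m') n = X.act m (X.hmap m' n) * X.hmap m n ∧
      X.hmap m (n * n') = X.hmap m n * X.act (X.epsH (X.bdry0 n)) (X.hmap m n') := by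
  intro m m' _ _ n n'
  refine ⟨by simp [XModGG.hmap, mul_assoc], ?_⟩
  -- Via `εᴴ ∘ ∂₀ = ∂ ∘ εᴳ` and the Peiffer identity, `n` acts on `G` as conjugation by `εᴳ n`.
  rw [← X.compat_eps, X.xmod2]
  simp [XModGG.hmap, mul_assoc]
end

section
/- Let (G, G₀, d₀ᴳ, d₁ᴳ, εᴳ), (H, H₀, d₀ᴴ, d₁ᴴ, εᴴ), ∂, ∂₀ and the actions be an encoded crossed module of group-groupoids, with M = ker d₀ᴴ, N = G₀, P = H₀ and h(m, n) = (m • εᴳ(n)) · εᴳ(n)⁻¹. Then [axiom CS5] for all p ∈ P, m ∈ M and n ∈ N: h(εᴴ(p) · m · εᴴ(p)⁻¹, p • n) = εᴴ(p) • h(m, n), where p • n is the action of H₀ on G₀ and εᴴ(p) • h(m, n) is the action of H on G. -/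
/-- axiom [CS5] for the crossed square associated with a crossed module of
group-groupoids: h(p • m, p • n) = p • h(m, n), where p acts on m ∈ M by conjugation by
εᴴ(p), on n ∈ N via the H₀-action on G₀, and on h(m,n) ∈ L via εᴴ(p). -/
theorem xmodgg_crossed_square_CS5 {G G₀ H H₀ : Type*}
    [Group G] [Group G₀] [Group H] [Group H₀] (X : XModGG G G₀ H H₀) :
    ∀ p : H₀, ∀ m : H, m ∈ X.d0H.ker → ∀ n : G₀,
      X.hmap (X.epsH p * m * (X.epsH p)⁻¹) (X.act0 p n)
        = X.act (X.epsH p) (X.hmap m n) := by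
  intro p m _ n
  -- `εᴳ(p • n) = εᴴ(p) • εᴳ(n)`, so the inner `εᴴ(p)⁻¹` of the conjugate cancels.
  simp only [XModGG.hmap, X.act_eps, map_mul, map_inv, MulAut.mul_apply, MulAut.inv_apply_self]
end

section
/- Let (L, M, N, P, λ, λ′, μ, ν, h) be a crossed square of groups in which moreover (L, N, λ′) with the induced N-action and (M, P, μ) with the induced P-action are crossed modules. Form the semidirect products L ⋊ N (N acting on L) and M ⋊ P (P acting on M). Then the formula (m, p) • (l, n) := (m • (p • l) · h(m, p • n), p • n) defines an action of the group M ⋊ P on the group L ⋊ N by group automorphisms; that is, each (m, p) acts as a group automorphism of L ⋊ N and ((m, p)(m′, p′)) • (l, n) = (m, p) • ((m′, p′) • (l, n)). -/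
/-!
Writing an element of `M ⋊ P` as `(m, p)`, the group `P` acts diagonally on `L ⋊ N`, and `m` acts by
`(l, n) ↦ ((m • l) * h m n, n)`. Compatibility with the product of `M ⋊ P` follows from the expansion
of `h (m * m') n` and the `P`-equivariance of `h`. Multiplicativity of each `(m, p)` follows from the
expansion of `h m (n * n')` together with one commutation rule, `CrossedSquare.h_comm`: conjugation
by `h m n` in `L` is the action of the commutator of `μ m` and `ν n`.
-/

/-- A crossed square of groups (L, M, N, P, λ, λ′, μ, ν, h), with P acting on L, M, N by
automorphisms (M acting on L, N via μ; N acting on L, M via ν), written multiplicatively. -/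
structure CrossedSquare (L M N P : Type*) [Group L] [Group M] [Group N] [Group P] where
  lam : L →* M
  lam' : L →* N
  mu : M →* P
  nu : N →* P
  comm_sq : ∀ l : L, nu (lam' l) = mu (lam l)
  actL : P →* MulAut L
  actM : P →* MulAut M
  actN : P →* MulAut N
  h : M → N → L
  lam_equiv : ∀ (p : P) (l : L), lam (actL p l) = actM p (lam l)
  lam'_equiv : ∀ (p : P) (l : L), lam' (actL p l) = actN p (lam' l)
  xmodM1 : ∀ (p : P) (m : M), mu (actM p m) = p * mu m * p⁻¹
  xmodM2 : ∀ m m₁ : M, actM (mu m) m₁ = m * m₁ * m⁻¹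
  xmodN1 : ∀ (p : P) (n : N), nu (actN p n) = p * nu n * p⁻¹
  xmodN2 : ∀ n n₁ : N, actN (nu n) n₁ = n * n₁ * n⁻¹
  xmodL1 : ∀ (p : P) (l : L), mu (lam (actL p l)) = p * mu (lam l) * p⁻¹
  xmodL2 : ∀ l l₁ : L, actL (mu (lam l)) l₁ = l * l₁ * l⁻¹
  lam_h : ∀ (m : M) (n : N), lam (h m n) = m * actM (nu n) m⁻¹
  lam'_h : ∀ (m : M) (n : N), lam' (h m n) = actN (mu m) n * n⁻¹
  h_lam : ∀ (l : L) (n : N), h (lam l) n = l * actL (nu n) l⁻¹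
  h_lam' : ∀ (m : M) (l : L), h m (lam' l) = actL (mu m) l * l⁻¹
  h_mul_left : ∀ (m m' : M) (n : N), h (m * m') n = actL (mu m) (h m' n) * h m n
  h_mul_right : ∀ (m : M) (n n' : N), h m (n * n') = h m n * actL (nu n) (h m n')
  h_act : ∀ (p : P) (m : M) (n : N), h (actM p m) (actN p n) = actL p (h m n)

namespace CrossedSquare

variable {L M N P : Type*} [Group L] [Group M] [Group N] [Group P] (X : CrossedSquare L M N P)

theorem h_one_left (n : N) : X.h 1 n = 1 := by
  simpa using X.h_mul_left 1 1 n

theorem h_one_right (m : M) : X.h m 1 = 1 := by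
  simpa using X.h_mul_right m 1 1

/-- The actions of `M` and `N` on `L` commute up to conjugation by `h m n`. This is the Peiffer
identity for `L → P`, applied to `h m n`, whose image in `P` is the commutator of `μ m` and `ν n`. -/
theorem h_comm (m : M) (n : N) (l : L) :
    X.h m n * X.actL (X.nu n) (X.actL (X.mu m) l)
      = X.actL (X.mu m) (X.actL (X.nu n) l) * X.h m n := by
  have e : X.mu (X.lam (X.h m n)) * X.nu n * X.mu m = X.mu m * X.nu n := by
    rw [X.lam_h, map_mul, X.xmodM1, map_inv]
    group
  rw [← mul_inv_eq_iff_eq_mul, ← X.xmodL2]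
  simp only [← MulAut.mul_apply, ← map_mul, ← mul_assoc, e]

/-- The action `(m, p) • (l, n) = ((m • p • l) * h m (p • n), p • n)` of `M ⋊ P` on `L ⋊ N` by group
automorphisms. -/
@[reducible]
def semidirectAction :
    MulDistribMulAction (M ⋊[X.actM] P) (L ⋊[X.actL.comp X.nu] N) where
  smul g x := ⟨X.actL (X.mu g.left) (X.actL g.right x.left) * X.h g.left (X.actN g.right x.right),
    X.actN g.right x.right⟩
  one_smul x := by
    change (⟨_, _⟩ : L ⋊[X.actL.comp X.nu] N) = x
    ext <;> simp [h_one_left]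
  mul_smul g g' x := by
    change (⟨_, _⟩ : L ⋊[X.actL.comp X.nu] N) =
      ⟨X.actL (X.mu g.left) (X.actL g.right (_ * _)) * X.h g.left (X.actN g.right (X.actN _ _)),
        X.actN g.right (X.actN _ _)⟩
    ext
    -- Since `μ` is equivariant, `μ (p • m') * p = p * μ m'` in `P`.
    · have e (l : L) : X.actL (X.mu (X.actM g.right g'.left)) (X.actL g.right l)
          = X.actL g.right (X.actL (X.mu g'.left) l) := by
        simp [X.xmodM1]
      simp [h_mul_left, h_act, e, mul_assoc]
    · simp
  smul_one g := by
    change (⟨_, _⟩ : L ⋊[X.actL.comp X.nu] N) = 1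
    ext <;> simp [h_one_right]
  smul_mul g x y := by
    change (⟨_, _⟩ : L ⋊[X.actL.comp X.nu] N) = ⟨_, _⟩ * ⟨_, _⟩
    ext
    · have e : X.actL g.right (X.actL (X.nu x.right) y.left)
          = X.actL (X.nu (X.actN g.right x.right)) (X.actL g.right y.left) := by
        simp [X.xmodN1]
      have c := X.h_comm g.left (X.actN g.right x.right) (X.actL g.right y.left)
      simp only [SemidirectProduct.mul_left, SemidirectProduct.mul_right, MonoidHom.comp_apply,
        map_mul, h_mul_right, e, mul_assoc]
      simp only [← mul_assoc (X.h _ _), c]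
      simp only [mul_assoc]
    · simp

end CrossedSquare

/-- For a crossed square in which moreover (L, N, λ′) (with the induced
N-action) and (M, P, μ) are crossed modules, the formula
(m, p) • (l, n) = (m • (p • l) · h(m, p • n), p • n) defines an action of M ⋊ P on
L ⋊ N by group automorphisms. -/
theorem crossed_square_semidirect_action {L M N P : Type*}
    [Group L] [Group M] [Group N] [Group P] (X : CrossedSquare L M N P)
    (hLN1 : ∀ (n : N) (l : L), X.lam' (X.actL (X.nu n) l) = n * X.lam' l * n⁻¹)
    (hLN2 : ∀ l l₁ : L, X.actL (X.nu (X.lam' l)) l₁ = l * l₁ * l⁻¹) :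
    ∃ Φ : (M ⋊[X.actM] P) →* MulAut (L ⋊[X.actL.comp X.nu] N),
      ∀ (m : M) (p : P) (l : L) (n : N),
        Φ (⟨m, p⟩ : M ⋊[X.actM] P) (⟨l, n⟩ : L ⋊[X.actL.comp X.nu] N)
          = (⟨X.actL (X.mu m) (X.actL p l) * X.h m (X.actN p n), X.actN p n⟩ :
              L ⋊[X.actL.comp X.nu] N) := by
  let _ := X.semidirectAction
  exact ⟨MulDistribMulAction.toMulAut _ _, fun _ _ _ _ => rfl⟩
end

section
/- Let (L, M, N, P, λ, λ′, μ, ν, h) be a crossed square of groups in which moreover (L, N, λ′) and (M, P, μ) are crossed modules, and let M ⋊ P act on L ⋊ N by (m, p) • (l, n) = (m • (p • l) · h(m, p • n), p • n). Then the map λ × ν : L ⋊ N → M ⋊ P, (l, n) ↦ (λ(l), ν(n)), is a group homomorphism and, together with this action, is a crossed module of groups: (λ × ν)((m, p) • (l, n)) = (m, p) · (λ(l), ν(n)) · (m, p)⁻¹ and (λ(l), ν(n)) • (l′, n′) = (l, n) · (l′, n′) · (l, n)⁻¹, for all (l, n), (l′, n′) ∈ L ⋊ N and (m, p) ∈ M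 ⋊ P. -/
/-- For a crossed square in which moreover (L, N, λ′) and (M, P, μ) are
crossed modules, with M ⋊ P acting on L ⋊ N by
(m, p) • (l, n) = (m • (p • l) · h(m, p • n), p • n), the map
λ × ν : L ⋊ N → M ⋊ P, (l, n) ↦ (λ(l), ν(n)), is a group homomorphism and together with
this action is a crossed module of groups. -/
theorem crossed_square_gives_crossed_module_of_semidirect_products {L M N P : Type*}
    [Group L] [Group M] [Group N] [Group P] (X : CrossedSquare L M N P)
    (hLN1 : ∀ (n : N) (l : L), X.lam' (X.actL (X.nu n) l) = n * X.lam' l * n⁻¹)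
    (hLN2 : ∀ l l₁ : L, X.actL (X.nu (X.lam' l)) l₁ = l * l₁ * l⁻¹)
    (Φ : (M ⋊[X.actM] P) →* MulAut (L ⋊[X.actL.comp X.nu] N))
    (hΦ : ∀ (m : M) (p : P) (l : L) (n : N),
      Φ (⟨m, p⟩ : M ⋊[X.actM] P) (⟨l, n⟩ : L ⋊[X.actL.comp X.nu] N)
        = (⟨X.actL (X.mu m) (X.actL p l) * X.h m (X.actN p n), X.actN p n⟩ :
            L ⋊[X.actL.comp X.nu] N)) :
    ∃ D : (L ⋊[X.actL.comp X.nu] N) →* (M ⋊[X.actM] P),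
      (∀ (l : L) (n : N),
        D (⟨l, n⟩ : L ⋊[X.actL.comp X.nu] N) = (⟨X.lam l, X.nu n⟩ : M ⋊[X.actM] P)) ∧
      (∀ (x : L ⋊[X.actL.comp X.nu] N) (y : M ⋊[X.actM] P),
        D (Φ y x) = y * D x * y⁻¹) ∧
      (∀ x x' : L ⋊[X.actL.comp X.nu] N, Φ (D x) x' = x * x' * x⁻¹) := by
  obtain ⟨D, hD⟩ : ∃ D : (L ⋊[X.actL.comp X.nu] N) →* (M ⋊[X.actM] P), ∀ (l : L) (n : N),
      D (⟨l, n⟩ : L ⋊[X.actL.comp X.nu] N) = (⟨X.lam l, X.nu n⟩ : M ⋊[X.actM] P) :=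
    ⟨SemidirectProduct.map (φ₁ := X.actL.comp X.nu) (φ₂ := X.actM) X.lam X.nu
      fun n => MonoidHom.ext fun l => X.lam_equiv (X.nu n) l, fun _ _ => rfl⟩
  refine ⟨D, hD, ?_, ?_⟩
  · rintro ⟨l, n⟩ ⟨m, p⟩
    rw [hΦ, hD, hD]
    ext
    · -- `λ(m • p • l) = m (p • λ l) m⁻¹`, and its last factor cancels the first factor of
      -- `λ(h(m, p • n)) = m ((p • n) • m⁻¹)`.
      simp [X.lam_equiv, X.xmodM2, X.lam_h, X.xmodN1, mul_assoc]
    · simp [X.xmodN1]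
  · rintro ⟨l, n⟩ ⟨l', n'⟩
    rw [hD, hΦ]
    ext
    · -- `λ l` acts on `L` as conjugation by `l`, and the trailing `l⁻¹` cancels the leading `l`
      -- of `h(λ l, n • n') = l ((n • n') • l⁻¹)`.
      simp [X.xmodL2, X.h_lam, X.xmodN1, mul_assoc]
    · simp [X.xmodN2]
end
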